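/- arXiv:2107.11199 — 7 statements merged into one kernel-verified Lean document; each statement's English description precedes it below -/
import Mathlib

section
/- Let (X,d) be a metric space, T : X → X a type 1 φ_{x₀}-contraction with point x₀ ∈ X and given function φ : X → [0,∞). If φ(x₀) = 0 and φ(x) ≤ d(Tx,x) for all x ∈ C_{x₀,ρ}, then the circle C_{x₀,ρ} is a φ-fixed circle of T, i.e. C_{x₀,ρ} ⊆ Fix(T) ∩ Z_φ. -/
/-- Auto-formalization of a φ-fixed circle theorem. -/
theorem stmt_0 {X : Type*} [MetricSpace X] (T : X → X) (φ : X → ℝ)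
    (hφ : ∀ x, 0 ≤ φ x) (x₀ : X)
    (hT : ∃ k ∈ Set.Ioo (0:ℝ) 1, ∀ x : X, 0 < dist (T x) x →
      max (max (dist x (T x)) (φ (T x))) (φ x) ≤
        k * max (max (dist x x₀) (φ x)) (φ x₀))
    (hx₀ : φ x₀ = 0)
    (ρ : ℝ) (hρ : ρ = sInf {r : ℝ | ∃ y, T y ≠ y ∧ r = dist (T y) y})
    (hineq : ∀ x : X, dist x x₀ = ρ → φ x ≤ dist (T x) x) :
    ∀ x : X, dist x x₀ = ρ → T x = x ∧ φ x = 0 := by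
  intro x hx
  obtain ⟨k, ⟨hk0, hk1⟩, hk⟩ := hT
  have hfix : T x = x := by
    by_contra hne
    have hD : 0 < dist (T x) x := dist_pos.mpr hne
    have hle : ρ ≤ dist (T x) x := by
      rw [hρ]
      refine csInf_le ⟨0, ?_⟩ ⟨x, hne, rfl⟩
      rintro r ⟨y, _, rfl⟩
      exact dist_nonneg
    have h1 := hk x hD
    have h2 : dist x (T x) ≤ k * max (max (dist x x₀) (φ x)) (φ x₀) :=
      le_trans (le_trans (le_max_left _ _) (le_max_left _ _)) h1
    have h3 : max (max (dist x x₀) (φ x)) (φ x₀) ≤ dist (T x) x :=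
      max_le (max_le (hx ▸ hle) (hineq x hx)) (hx₀ ▸ hD.le)
    rw [dist_comm x (T x)] at h2
    nlinarith
  refine ⟨hfix, le_antisymm ?_ (hφ x)⟩
  have h := hineq x hx
  rwa [hfix, dist_self] at h
end

section
/- Let (X,d) be a metric space, T : X → X a type 1 φ_{x₀}-contraction with point x₀ ∈ X and given function φ : X → [0,∞). If φ(x₀) = 0 and φ(x) ≤ d(Tx,x) for all x ∈ D_{x₀,ρ}, then the disc D_{x₀,ρ} is a φ-fixed disc of T, i.e. D_{x₀,ρ} ⊆ Fix(T) ∩ Z_φ. -/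
/-- Auto-formalization of a φ-fixed disc theorem. -/
theorem stmt_1 {X : Type*} [MetricSpace X] (T : X → X) (φ : X → ℝ)
    (hφ : ∀ x, 0 ≤ φ x) (x₀ : X)
    (hT : ∃ k ∈ Set.Ioo (0:ℝ) 1, ∀ x : X, 0 < dist (T x) x →
      max (max (dist x (T x)) (φ (T x))) (φ x) ≤
        k * max (max (dist x x₀) (φ x)) (φ x₀))
    (hx₀ : φ x₀ = 0)
    (ρ : ℝ) (hρ : ρ = sInf {r : ℝ | ∃ y, T y ≠ y ∧ r = dist (T y) y})
    (hineq : ∀ x : X, dist x x₀ ≤ ρ → φ x ≤ dist (T x) x) :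
    ∀ x : X, dist x x₀ ≤ ρ → T x = x ∧ φ x = 0 := by
  obtain ⟨k, ⟨hk0, hk1⟩, hk⟩ := hT
  intro x hx
  have hfix : T x = x := by
    by_contra hne
    have ha : 0 < dist (T x) x := dist_pos.mpr hne
    have hle : ρ ≤ dist (T x) x := by
      rw [hρ]
      refine csInf_le ⟨0, ?_⟩ ⟨x, hne, rfl⟩
      rintro r ⟨y, _, rfl⟩
      exact dist_nonneg
    have h1 : max (max (dist x x₀) (φ x)) (φ x₀) ≤ dist (T x) x :=
      max_le (max_le (hx.trans hle) (hineq x hx)) (hx₀ ▸ ha.le)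
    have h2 : dist x (T x) ≤ k * max (max (dist x x₀) (φ x)) (φ x₀) :=
      ((le_max_left _ _).trans (le_max_left _ _)).trans (hk x ha)
    rw [dist_comm] at h2
    have h3 := mul_le_mul_of_nonneg_left h1 hk0.le
    nlinarith
  refine ⟨hfix, le_antisymm ?_ (hφ x)⟩
  have h := hineq x hx
  rwa [hfix, dist_self] at h
end

section
/- Let (X,d) be a metric space, T : X → X a type 2 φ_{x₀}-contraction with point x₀ ∈ X and given function φ : X → [0,∞). If φ(x₀) = 0 and φ(x) ≤ d(Tx,x) for all x ∈ C_{x₀,ρ}, then the circle C_{x₀,ρ} is a φ-fixed circle of T, i.e. C_{x₀,ρ} ⊆ Fix(T) ∩ Z_φ. -/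
/-- Auto-formalization of a φ-fixed circle theorem. -/
theorem stmt_4 {X : Type*} [MetricSpace X] (T : X → X) (φ : X → ℝ)
    (hφ : ∀ x, 0 ≤ φ x) (x₀ : X)
    (hT : ∃ k ∈ Set.Ioo (0:ℝ) 1, ∀ x : X, 0 < dist (T x) x →
      max (dist x (T x)) (φ (T x)) + φ x ≤
        k * max (dist x x₀) (φ x) + φ x₀)
    (hx₀ : φ x₀ = 0)
    (ρ : ℝ) (hρ : ρ = sInf {r : ℝ | ∃ y, T y ≠ y ∧ r = dist (T y) y})
    (hineq : ∀ x : X, dist x x₀ = ρ → φ x ≤ dist (T x) x) :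
    ∀ x : X, dist x x₀ = ρ → T x = x ∧ φ x = 0 := by
  intro x hx
  obtain ⟨k, ⟨hk0, hk1⟩, h⟩ := hT
  have h1 := hineq x hx
  have hfix : T x = x := by
    by_contra hne
    have hpos : 0 < dist (T x) x := dist_pos.mpr hne
    have h2 := h x hpos
    have hle : ρ ≤ dist (T x) x := by
      rw [hρ]
      refine csInf_le ⟨0, ?_⟩ ⟨x, hne, rfl⟩
      rintro r ⟨y, _, rfl⟩
      exact dist_nonneg
    have h3 : max (dist x x₀) (φ x) ≤ dist (T x) x := max_le (hx ▸ hle) h1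
    have h4 := le_max_left (dist x (T x)) (φ (T x))
    rw [dist_comm x (T x)] at h4 h2
    have h5 := mul_le_mul_of_nonneg_left h3 hk0.le
    have h6 := mul_lt_mul_of_pos_right hk1 hpos
    have h7 := hφ x
    linarith
  refine ⟨hfix, le_antisymm ?_ (hφ x)⟩
  rw [hfix, dist_self] at h1
  exact h1
end

section
/- Let (X,d) be a metric space, T : X → X a type 2 φ_{x₀}-contraction with point x₀ ∈ X and given function φ : X → [0,∞). If φ(x₀) = 0 and φ(x) ≤ d(Tx,x) for all x ∈ D_{x₀,ρ}, then the disc D_{x₀,ρ} is a φ-fixed disc of T, i.e. D_{x₀,ρ} ⊆ Fix(T) ∩ Z_φ. -/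
/-- Auto-formalization of a φ-fixed disc theorem. -/
theorem stmt_5 {X : Type*} [MetricSpace X] (T : X → X) (φ : X → ℝ)
    (hφ : ∀ x, 0 ≤ φ x) (x₀ : X)
    (hT : ∃ k ∈ Set.Ioo (0:ℝ) 1, ∀ x : X, 0 < dist (T x) x →
      max (dist x (T x)) (φ (T x)) + φ x ≤
        k * max (dist x x₀) (φ x) + φ x₀)
    (hx₀ : φ x₀ = 0)
    (ρ : ℝ) (hρ : ρ = sInf {r : ℝ | ∃ y, T y ≠ y ∧ r = dist (T y) y})
    (hineq : ∀ x : X, dist x x₀ ≤ ρ → φ x ≤ dist (T x) x) :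
    ∀ x : X, dist x x₀ ≤ ρ → T x = x ∧ φ x = 0 := by
  intro x hx
  obtain ⟨k, ⟨hk0, hk1⟩, h⟩ := hT
  have hfix : T x = x := by
    by_contra hne
    have hpos : 0 < dist (T x) x := dist_pos.mpr hne
    have hle : ρ ≤ dist (T x) x := by
      rw [hρ]
      refine csInf_le ⟨0, ?_⟩ ⟨x, hne, rfl⟩
      rintro r ⟨y, -, rfl⟩
      exact dist_nonneg
    have h1 := h x hpos
    have h2 : max (dist x x₀) (φ x) ≤ dist (T x) x := max_le (hx.trans hle) (hineq x hx)
    have h3 := le_max_left (dist x (T x)) (φ (T x))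
    rw [dist_comm x (T x)] at h1 h3
    have h4 := mul_le_mul_of_nonneg_left h2 hk0.le
    have h5 := hφ x
    nlinarith
  refine ⟨hfix, le_antisymm ?_ (hφ x)⟩
  have h6 := hineq x hx
  rwa [hfix, dist_self] at h6
end

section
/- Let (X,d) be a metric space, T : X → X a type 3 φ_{x₀}-contraction with point x₀ ∈ X and given function φ : X → [0,∞). If φ(x₀) = 0 and φ(x) ≤ d(Tx,x) for all x ∈ C_{x₀,ρ}, then the circle C_{x₀,ρ} is a φ-fixed circle of T, i.e. C_{x₀,ρ} ⊆ Fix(T) ∩ Z_φ. -/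
/-- Auto-formalization of a φ-fixed circle theorem. -/
theorem stmt_8 {X : Type*} [MetricSpace X] (T : X → X) (φ : X → ℝ)
    (hφ : ∀ x, 0 ≤ φ x) (x₀ : X)
    (hT : ∃ k ∈ Set.Ioo (0:ℝ) 1, ∀ x : X, 0 < dist (T x) x →
      dist x (T x) + φ (T x) + φ x ≤
        k * (dist x x₀ + φ x + φ x₀))
    (hx₀ : φ x₀ = 0)
    (ρ : ℝ) (hρ : ρ = sInf {r : ℝ | ∃ y, T y ≠ y ∧ r = dist (T y) y})
    (hineq : ∀ x : X, dist x x₀ = ρ → φ x ≤ dist (T x) x) :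
    ∀ x : X, dist x x₀ = ρ → T x = x ∧ φ x = 0 := by
  intro x hx
  have hfix : T x = x := by
    by_contra hne
    obtain ⟨k, ⟨hk0, hk1⟩, h⟩ := hT
    have hd : 0 < dist (T x) x := dist_pos.mpr hne
    have h1 := h x hd
    have hle : ρ ≤ dist (T x) x := by
      rw [hρ]
      refine csInf_le ⟨0, ?_⟩ ⟨x, hne, rfl⟩
      rintro r ⟨y, _, rfl⟩
      exact dist_nonneg
    rw [hx, hx₀, dist_comm x (T x)] at h1
    have h2 := hφ x
    have h3 := hφ (T x)
    have h4 : k * (ρ + φ x + 0) ≤ k * (dist (T x) x + φ x) :=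
      mul_le_mul_of_nonneg_left (by linarith) hk0.le
    have h5 : 0 < (1 - k) * (dist (T x) x + φ x) :=
      mul_pos (by linarith) (by linarith)
    linarith
  refine ⟨hfix, le_antisymm ?_ (hφ x)⟩
  have := hineq x hx
  rwa [hfix, dist_self] at this
end

section
/- Let (X,d) be a metric space, T : X → X a type 3 φ_{x₀}-contraction with point x₀ ∈ X and given function φ : X → [0,∞). If φ(x₀) = 0 and φ(x) ≤ d(Tx,x) for all x ∈ D_{x₀,ρ}, then the disc D_{x₀,ρ} is a φ-fixed disc of T, i.e. D_{x₀,ρ} ⊆ Fix(T) ∩ Z_φ. -/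
/-- Auto-formalization of a φ-fixed disc theorem. -/
theorem stmt_9 {X : Type*} [MetricSpace X] (T : X → X) (φ : X → ℝ)
    (hφ : ∀ x, 0 ≤ φ x) (x₀ : X)
    (hT : ∃ k ∈ Set.Ioo (0:ℝ) 1, ∀ x : X, 0 < dist (T x) x →
      dist x (T x) + φ (T x) + φ x ≤
        k * (dist x x₀ + φ x + φ x₀))
    (hx₀ : φ x₀ = 0)
    (ρ : ℝ) (hρ : ρ = sInf {r : ℝ | ∃ y, T y ≠ y ∧ r = dist (T y) y})
    (hineq : ∀ x : X, dist x x₀ ≤ ρ → φ x ≤ dist (T x) x) :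
    ∀ x : X, dist x x₀ ≤ ρ → T x = x ∧ φ x = 0 := by
  intro x hx
  have h1 : T x = x := by
    by_contra hne
    obtain ⟨k, ⟨hk0, hk1⟩, hk⟩ := hT
    have hd : 0 < dist (T x) x := dist_pos.2 hne
    have h := hk x hd
    have hle : ρ ≤ dist (T x) x := by
      rw [hρ]
      refine csInf_le ⟨0, ?_⟩ ⟨x, hne, rfl⟩
      rintro r ⟨y, _, rfl⟩
      exact dist_nonneg
    rw [dist_comm x (T x), hx₀] at h
    have a := hφ (T x)
    have b := hφ x
    have c : k * (dist x x₀ + φ x + 0) ≤ k * (dist (T x) x + φ x) :=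
      mul_le_mul_of_nonneg_left (by linarith) hk0.le
    nlinarith [mul_pos (sub_pos.2 hk1) (add_pos_of_pos_of_nonneg hd b)]
  refine ⟨h1, le_antisymm ?_ (hφ x)⟩
  have := hineq x hx
  rwa [h1, dist_self] at this
end

section
/- Let (X,d) be a metric space, T : X → X a generalized type 3 φ_{x₀}-contraction with point x₀ ∈ X and given function φ : X → [0,∞). If φ(x₀) = 0, then x₀ is a φ-fixed point of T, i.e. Tx₀ = x₀ and φ(x₀) = 0. -/
/-- Auto-formalization of a φ-fixed point theorem. -/
theorem stmt_17 {X : Type*} [MetricSpace X] (T : X → X) (φ : X → ℝ)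
    (hφ : ∀ x, 0 ≤ φ x) (x₀ : X)
    (hT : ∃ k ∈ Set.Ioo (0:ℝ) (1/2), ∀ x : X, 0 < dist (T x) x →
      dist x (T x) + φ (T x) + φ x ≤
        k * (max (max (dist x x₀) (dist x (T x))) (max (dist x₀ (T x₀)) ((dist x (T x₀) + dist x₀ (T x)) / (1 + dist x (T x) + dist x₀ (T x₀)) * dist x x₀)) + φ x + φ x₀))
    (hx₀ : φ x₀ = 0) :
    T x₀ = x₀ ∧ φ x₀ = 0 := by
  refine ⟨?_, hx₀⟩
  by_contra hne
  obtain ⟨k, ⟨hk0, hk⟩, h⟩ := hT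
  have hd : 0 < dist (T x₀) x₀ := dist_pos.mpr hne
  have h1 := h x₀ hd
  have hp := hφ (T x₀)
  rw [dist_comm] at hd
  rw [dist_self, mul_zero, hx₀, max_eq_right hd.le, max_eq_left hd.le, max_self] at h1
  nlinarith
end
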